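/- arXiv:1307.7928 — 2 statements merged into one kernel-verified Lean document; each statement's English description precedes it below -/
import Mathlib

section
/- Let X be a regular Hausdorff (T3) space and x ∈ X. If player II has a winning strategy in the game G1(Ω_x, Ω_x), then X is Fréchet at x. -/
/-! The proof goes through the dual game in which neighbourhoods of `x` are played against points.

Fix a winning strategy `F` for player II. After any position of length `n`, all points `y ≠ x` in
some neighbourhood `U` of `x` are possible answers of `F` to a next move: otherwise the set of
points `y ≠ x` that are never answers belongs to `Ω_x`, and playing it contradicts the legality
of `F` (`exists_nhds_answers`). So a finite list of points, each taken from the neighbourhood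
attached to the list before it, is realised as the list of answers of `F` to a position.

To get convergence rather than mere clustering, choose points `u n ∈ A` such that `u n` lies in the
neighbourhoods attached to *all* sublists of `u 0, …, u (n - 1)` (Gruenhage's trick). Then every
subsequence of `u` is the sequence of answers of `F` in some play, so `x` is in its closure;
hence no subsequence avoids a neighbourhood of `x`, that is, `u` converges to `x`. -/

open Set Topology Filter

/-- `Ω_x`: the collection of all sets `A ⊆ X` such that `x ∉ A` and `x ∈ cl A`. -/
def OmegaAt {X : Type*} [TopologicalSpace X] (x : X) : Set (Set X) :=
  {A | x ∉ A ∧ x ∈ closure A}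

/-- Player II has a winning strategy in the single-selection game `G₁(𝒜, ·)` with winning
condition `Win` on the set of points selected by player II. -/
def HasWinningStrategyII {α : Type*} (𝒜 : Set (Set α)) (Win : Set α → Prop) : Prop :=
  ∃ F : (n : ℕ) → (Fin (n + 1) → Set α) → α,
    (∀ (n : ℕ) (D : Fin (n + 1) → Set α), (∀ i, D i ∈ 𝒜) → F n D ∈ D (Fin.last n)) ∧
    ∀ D : ℕ → Set α, (∀ n, D n ∈ 𝒜) → Win {y | ∃ n : ℕ, y = F n fun i => D i.val}

/-- Only the values of `D` below `n` matter: they are the position before the move `E y`. -/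
lemma exists_nhds_answers {X : Type*} [TopologicalSpace X] {x : X}
    (F : (n : ℕ) → (Fin (n + 1) → Set X) → X)
    (hF : ∀ (n : ℕ) (D : Fin (n + 1) → Set X), (∀ i, D i ∈ OmegaAt x) → F n D ∈ D (Fin.last n))
    (n : ℕ) (D : ℕ → OmegaAt x) :
    ∃ U ∈ 𝓝 x, ∃ E : X → OmegaAt x, ∀ y ∈ U, y ≠ x →
      F n (fun i => if i.val < n then (D i.val : Set X) else E y) = y := by
  classical
  set B : Set X := {y | y ≠ x ∧ ∀ E : OmegaAt x,
    F n (fun i => if i.val < n then (D i.val : Set X) else E) ≠ y} with hB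
  have hx : x ∉ closure B := by
    intro hcl
    have hBΩ : B ∈ OmegaAt x := ⟨fun h => h.1 rfl, hcl⟩
    have := hF n (fun i => if i.val < n then (D i.val : Set X) else B) (by
      intro i
      split_ifs
      · exact (D i.val).2
      · exact hBΩ)
    simp only [Fin.val_last, lt_irrefl, if_false] at this
    exact this.2 ⟨B, hBΩ⟩ rfl
  have key : ∀ y, ∃ E : OmegaAt x, y ∈ (closure B)ᶜ → y ≠ x →
      F n (fun i => if i.val < n then (D i.val : Set X) else E) = y := by
    intro y
    by_contra! hcon
    exact (hcon (D 0)).1 (subset_closure ⟨(hcon (D 0)).2.1, fun E => (hcon E).2.2⟩)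
  choose E hE using key
  exact ⟨(closure B)ᶜ, isClosed_closure.isOpen_compl.mem_nhds hx, E, hE⟩

/-- The position at which the strategy has answered with the points of a list, latest point first,
where `E n D y` is the move made after the first `n` moves of `D` to obtain the answer `y`.
Values from the length of the list on are irrelevant, and equal to `A`. -/
def positionOf {X S : Type*} (A : S) (E : ℕ → (ℕ → S) → X → S) : List X → ℕ → S
  | [] => fun _ => A
  | y :: s => Function.update (positionOf A E s) s.length (E s.length (positionOf A E s) y)

/-- The history of the play, latest point first, when each point is chosen by `pick`. -/
def historyOf {X : Type*} (pick : List X → X) : ℕ → List X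
  | 0 => []
  | n + 1 => pick (historyOf pick n) :: historyOf pick n

lemma historyOf_sublist {X : Type*} (pick : List X → X) {m n : ℕ} (h : m ≤ n) :
    (historyOf pick m).Sublist (historyOf pick n) := by
  induction n, h using Nat.le_induction with
  | base => exact List.Sublist.refl _
  | succ n _ ih => exact ih.trans (List.sublist_cons_self _ _)

/-- if `X` is a T3 space and player II has a winning strategy in `G₁(Ω_x, Ω_x)`,
then `X` is Fréchet at `x`: for every `A ⊆ X` with `x ∈ cl A` there is a sequence of points
of `A` converging to `x`. -/
theorem statement3 {X : Type*} [TopologicalSpace X] [T3Space X] (x : X)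
    (h : HasWinningStrategyII (OmegaAt x) (fun S => x ∈ closure S)) :
    ∀ A : Set X, x ∈ closure A →
      ∃ u : ℕ → X, (∀ n, u n ∈ A) ∧ Tendsto u atTop (𝓝 x) := by
  intro A hA
  by_cases hxA : x ∈ A
  · exact ⟨fun _ => x, fun _ => hxA, tendsto_const_nhds⟩
  obtain ⟨F, hF, hwin⟩ := h
  choose U hU E hE using exists_nhds_answers F hF
  set A' : OmegaAt x := ⟨A, hxA, hA⟩
  set pos : List X → ℕ → OmegaAt x := positionOf A' E with hpos
  have hpick : ∀ l : List X, ∃ y ∈ A, ∀ s, s.Sublist l → y ∈ U s.length (pos s) := by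
    intro l
    have hmem : (⋂ s ∈ {s : List X | s ∈ l.sublists}, U s.length (pos s)) ∈ 𝓝 x :=
      (biInter_mem (List.finite_toSet _)).2 fun s _ => hU _ _
    obtain ⟨y, hyU, hyA⟩ := mem_closure_iff_nhds.1 hA _ hmem
    refine ⟨y, hyA, fun s hs => ?_⟩
    simp only [mem_iInter] at hyU
    exact hyU s (List.mem_sublists.2 hs)
  choose pick hpickA hpickU using hpick
  refine ⟨fun n => pick (historyOf pick n), fun n => hpickA _, ?_⟩
  rw [tendsto_def]
  intro V hV
  by_contra hcon
  obtain ⟨φ, hφ, hφV⟩ := extraction_of_frequently_atTop (not_eventually.1 hcon)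
  -- The subsequence `φ` is a legal play: `s k` lists its first `k` points.
  let s : ℕ → List X := fun k => Nat.rec [] (fun j t => pick (historyOf pick (φ j)) :: t) k
  have hs : ∀ k, s (k + 1) = pick (historyOf pick (φ k)) :: s k := fun _ => rfl
  have hlen : ∀ k, (s k).length = k := by
    intro k
    induction k with
    | zero => rfl
    | succ k ih => rw [hs, List.length_cons, ih]
  have hsub : ∀ k, (s k).Sublist (historyOf pick (φ k)) := by
    intro k
    induction k with
    | zero => exact List.nil_sublist _
    | succ k ih =>
      have h1 : (s (k + 1)).Sublist (historyOf pick (φ k + 1)) := ih.cons_cons _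
      exact h1.trans (historyOf_sublist pick (hφ (Nat.lt_succ_self k)))
  let D : ℕ → OmegaAt x := fun k => E k (pos (s k)) (pick (historyOf pick (φ k)))
  have hD : ∀ k, ∀ i < k, pos (s k) i = D i := by
    intro k
    induction k with
    | zero => intro i hi; omega
    | succ k ih =>
      intro i hi
      have h1 : pos (s (k + 1)) = Function.update (pos (s k)) k (D k) := by
        have : pos (s (k + 1)) = Function.update (pos (s k)) (s k).length
          (E (s k).length (pos (s k)) (pick (historyOf pick (φ k)))) := rfl
        rw [this, hlen]
      rw [h1]
      rcases Nat.lt_succ_iff_lt_or_eq.1 hi with hlt | rfl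
      · rw [Function.update_of_ne hlt.ne, ih i hlt]
      · rw [Function.update_self]
  have hval : ∀ k, F k (fun i => (D i.val : Set X)) = pick (historyOf pick (φ k)) := by
    intro k
    have hy := hpickU (historyOf pick (φ k)) (s k) (hsub k)
    rw [hlen] at hy
    have hne : pick (historyOf pick (φ k)) ≠ x := fun h => hxA (h ▸ hpickA _)
    refine Eq.trans ?_ (hE k (pos (s k)) _ hy hne)
    congr 1
    funext i
    split_ifs with hi
    · rw [hD k i.val hi]
    · have : i.val = k := by omega
      rw [this]
  obtain ⟨y, hyV, n, hn⟩ :=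
    mem_closure_iff_nhds.1 (hwin (fun k => (D k : Set X)) fun k => (D k).2) V hV
  rw [hval] at hn
  exact hφV n (mem_of_eq_of_mem hn.symm hyV)
end

section
/- Let X be a regular Hausdorff (T3) space and x ∈ X. If player II has a winning strategy in the game G1(Ω_x, Ω_x), then X is strictly Fréchet at x. -/
/-!
Strategies of player II in `G₁(Ω_x, Ω_x)` dualize to strategies of the first player in Gruenhage's
neighbourhood-point game. After any legal history, the points `y ≠ x` that are *not* an answer
of `F` to some further `D ∈ Ω_x` form a set `B` with `x ∉ cl B`: otherwise `B ∈ Ω_x`, and the answer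
of `F` to `B` would lie in `B`. Hence all points `y ≠ x` of some neighbourhood of `x` are
answers, and choosing such neighbourhoods gives a strategy `σ` such that every sequence of points
`≠ x` played against it accumulates at `x` (`exists_cluster_strategy`).

Intersecting `σ` over all (finitely many) sublists of the history makes every subsequence of a play
a play against `σ`. If a play did not converge to `x`, then a subsequence would avoid a
neighbourhood of `x`, contradicting accumulation (`exists_convergence_strategy`). Picking the points
of `A n` in the neighbourhoods given by this second strategy yields the convergent selection.
-/

open Set Topology Filter

/-- The list `[y (n-1), …, y 0]` of the first `n` terms of `y`, the most recent one first. -/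
def hist {α : Type*} (y : ℕ → α) : ℕ → List α
  | 0 => []
  | n + 1 => y n :: hist y n

theorem length_hist {α : Type*} (y : ℕ → α) (n : ℕ) : (hist y n).length = n := by
  induction n with
  | zero => rfl
  | succ n ih => simp [hist, ih]

theorem getD_hist {α : Type*} (y : ℕ → α) (d : α) (n i : ℕ) (h : i ≤ n) :
    (hist y (n + 1)).getD (n - i) d = y i := by
  induction n with
  | zero =>
    obtain rfl : i = 0 := by omega
    simp [hist]
  | succ n ih =>
    rcases Nat.lt_or_ge n i with h' | h'
    · obtain rfl : i = n + 1 := by omega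
      simp [hist]
    · rw [Nat.succ_sub h', hist, List.getD_cons_succ]
      exact ih h'

theorem hist_sublist_of_le {α : Type*} (y : ℕ → α) {m n : ℕ} (h : m ≤ n) :
    (hist y m).Sublist (hist y n) := by
  induction h with
  | refl => exact List.Sublist.refl _
  | step _ ih => exact ih.cons _

theorem hist_comp_sublist {α : Type*} (y : ℕ → α) {φ : ℕ → ℕ} (hφ : StrictMono φ) (k : ℕ) :
    (hist (y ∘ φ) k).Sublist (hist y (φ k)) := by
  induction k with
  | zero => exact List.nil_sublist _
  | succ k ih => exact (ih.cons_cons (y (φ k))).trans (hist_sublist_of_le y (hφ k.lt_succ_self))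

/-- The answer of the strategy `F` to the move `S` after the history `p` of earlier moves, listed
with the most recent one first. The default value of `getD` is never reached. -/
def answer {X : Type*} (F : (n : ℕ) → (Fin (n + 1) → Set X) → X) (p : List (Set X)) (S : Set X) :
    X :=
  F p.length fun i => (S :: p).getD (p.length - i) ∅

theorem answer_hist {X : Type*} (F : (n : ℕ) → (Fin (n + 1) → Set X) → X) (D : ℕ → Set X) (n : ℕ) :
    answer F (hist D n) (D n) = F n fun i => D i := by
  have key : ∀ m, m = n → (F m fun i => (hist D (n + 1)).getD (m - i) ∅) = F n fun i => D i := by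
    rintro m rfl
    congr 1
    funext i
    exact getD_hist D ∅ m i (Nat.lt_succ_iff.1 i.2)
  exact key _ (length_hist D n)

theorem answer_mem {X : Type*} {Ω : Set (Set X)} {F : (n : ℕ) → (Fin (n + 1) → Set X) → X}
    (hF : ∀ (n : ℕ) (D : Fin (n + 1) → Set X), (∀ i, D i ∈ Ω) → F n D ∈ D (Fin.last n))
    {p : List (Set X)} (hp : ∀ S ∈ p, S ∈ Ω) {S : Set X} (hS : S ∈ Ω) : answer F p S ∈ S := by
  have := hF p.length (fun i => (S :: p).getD (p.length - i) ∅) ?_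
  · simpa [answer] using this
  · intro i
    have hlt : p.length - i < (S :: p).length := by simp only [List.length_cons]; omega
    rw [List.getD_eq_getElem _ _ hlt]
    rcases List.mem_cons.1 (List.getElem_mem hlt) with h | h
    · rw [h]; exact hS
    · exact hp _ h

/-- After a legal history, every point `y ≠ x` of a suitable neighbourhood of `x` is an answer
of the strategy: the set of non-answers, if it belonged to `Ω_x`, would contain an answer. -/
theorem exists_nhds_answer {X : Type*} [TopologicalSpace X] {x : X}
    {F : (n : ℕ) → (Fin (n + 1) → Set X) → X}
    (hF : ∀ (n : ℕ) (D : Fin (n + 1) → Set X), (∀ i, D i ∈ OmegaAt x) → F n D ∈ D (Fin.last n))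
    {p : List (Set X)} (hp : ∀ S ∈ p, S ∈ OmegaAt x) :
    ∃ U ∈ 𝓝 x, ∀ y ∈ U, y ≠ x → ∃ S ∈ OmegaAt x, answer F p S = y := by
  let B : Set X := {y | y ≠ x ∧ ∀ S ∈ OmegaAt x, answer F p S ≠ y}
  have hB : x ∉ closure B := fun hx => by
    have hBΩ : B ∈ OmegaAt x := ⟨fun h => h.1 rfl, hx⟩
    exact (answer_mem hF hp hBΩ).2 B hBΩ rfl
  refine ⟨(closure B)ᶜ, isClosed_closure.isOpen_compl.mem_nhds hB, fun y hy hyx => ?_⟩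
  by_contra! hcon
  exact hy (subset_closure ⟨hyx, hcon⟩)

/-- The dual strategy in the neighbourhood-point game, in its accumulation version. -/
theorem exists_cluster_strategy {X : Type*} [TopologicalSpace X] {x : X}
    (h : HasWinningStrategyII (OmegaAt x) (fun S => x ∈ closure S)) :
    ∃ σ : List X → Set X, (∀ l, σ l ∈ 𝓝 x) ∧
      ∀ y : ℕ → X, (∀ n, y n ≠ x) → (∀ n, y n ∈ σ (hist y n)) → x ∈ closure (range y) := by
  obtain ⟨F, hF, hwin⟩ := h
  have key : ∀ p : List (Set X), ∃ U ∈ 𝓝 x, ∃ δ : X → Set X, (∀ S ∈ p, S ∈ OmegaAt x) →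
      ∀ y ∈ U, y ≠ x → δ y ∈ OmegaAt x ∧ answer F p (δ y) = y := by
    intro p
    by_cases hp : ∀ S ∈ p, S ∈ OmegaAt x
    · obtain ⟨U, hU, hUp⟩ := exists_nhds_answer hF hp
      choose! δ hδ using hUp
      exact ⟨U, hU, δ, fun _ => hδ⟩
    · exact ⟨univ, univ_mem, fun _ => ∅, fun h => absurd h hp⟩
  choose U hU δ hδ using key
  -- `pos l` translates a history of points into a history of moves in `Ω_x` they answer.
  let pos : List X → List (Set X) := fun l => l.rec [] fun y _ p => δ p y :: p
  refine ⟨fun l => U (pos l), fun l => hU _, fun y hyx hy => ?_⟩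
  let D : ℕ → Set X := fun n => δ (pos (hist y n)) (y n)
  have hpos : ∀ n, pos (hist y n) = hist D n := by
    intro n
    induction n with
    | zero => rfl
    | succ n ih =>
      change D n :: pos (hist y n) = D n :: hist D n
      rw [ih]
  have hleg : ∀ n, ∀ S ∈ pos (hist y n), S ∈ OmegaAt x := by
    intro n
    induction n with
    | zero => intro S hS; cases hS
    | succ n ih =>
      intro S hS
      rcases List.mem_cons.1 (show S ∈ D n :: pos (hist y n) from hS) with rfl | hS
      · exact (hδ _ ih _ (hy n) (hyx n)).1
      · exact ih S hS
  refine closure_mono ?_ (hwin D fun n => (hδ _ (hleg n) _ (hy n) (hyx n)).1)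
  rintro _ ⟨n, rfl⟩
  refine ⟨n, ?_⟩
  rw [← answer_hist F D n, ← hpos]
  exact (hδ _ (hleg n) _ (hy n) (hyx n)).2.symm

/-- The dual strategy in its convergence version: intersecting over all sublists of the history
makes each subsequence of a play a play against the accumulation strategy. -/
theorem exists_convergence_strategy {X : Type*} [TopologicalSpace X] {x : X}
    (h : HasWinningStrategyII (OmegaAt x) (fun S => x ∈ closure S)) :
    ∃ τ : List X → Set X, (∀ l, τ l ∈ 𝓝 x) ∧
      ∀ a : ℕ → X, (∀ n, a n ∈ τ (hist a n)) → Tendsto a atTop (𝓝 x) := by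
  obtain ⟨σ, hσ, hwin⟩ := exists_cluster_strategy h
  refine ⟨fun s => ⋂ l ∈ {l | l ∈ s.sublists}, σ l,
    fun s => (biInter_mem (List.finite_toSet _)).2 fun l _ => hσ l, fun a ha => ?_⟩
  by_contra hcon
  obtain ⟨V, hV, hfreq⟩ := not_tendsto_iff_exists_frequently_notMem.1 hcon
  obtain ⟨φ, hφ, hφV⟩ := extraction_of_frequently_atTop hfreq
  have hx : x ∈ closure (range (a ∘ φ)) := by
    refine hwin _ (fun n hn => hφV n ?_) fun n => ?_
    · rw [show a (φ n) = x from hn]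
      exact mem_of_mem_nhds hV
    · exact mem_iInter₂.1 (ha (φ n)) _ (List.mem_sublists.2 (hist_comp_sublist a hφ n))
  obtain ⟨_, hzV, n, rfl⟩ := mem_closure_iff_nhds.1 hx V hV
  exact hφV n hzV

/-- if `X` is a T3 space and player II has a winning strategy in `G₁(Ω_x, Ω_x)`,
then `X` is strictly Fréchet at `x`: for every sequence `(Aₙ)` of subsets of `X` with
`x ∈ cl Aₙ` for all `n`, there are points `aₙ ∈ Aₙ` with `(aₙ) → x`. -/
theorem statement4 {X : Type*} [TopologicalSpace X] [T3Space X] (x : X)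
    (h : HasWinningStrategyII (OmegaAt x) (fun S => x ∈ closure S)) :
    ∀ A : ℕ → Set X, (∀ n, x ∈ closure (A n)) →
      ∃ a : ℕ → X, (∀ n, a n ∈ A n) ∧ Tendsto a atTop (𝓝 x) := by
  obtain ⟨τ, hτ, hconv⟩ := exists_convergence_strategy h
  intro A hA
  have hpick : ∀ (n : ℕ) (l : List X), ∃ y, y ∈ A n ∧ y ∈ τ l := fun n l => by
    obtain ⟨y, hyτ, hyA⟩ := mem_closure_iff_nhds.1 (hA n) (τ l) (hτ l)
    exact ⟨y, hyA, hyτ⟩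
  choose pick hpA hpτ using hpick
  let H : ℕ → List X := fun n => n.rec [] fun n l => pick n l :: l
  have hH : ∀ n, hist (fun n => pick n (H n)) n = H n := by
    intro n
    induction n with
    | zero => rfl
    | succ n ih =>
      change pick n (H n) :: _ = pick n (H n) :: H n
      rw [ih]
  refine ⟨fun n => pick n (H n), fun n => hpA _ _, hconv _ fun n => ?_⟩
  rw [hH]
  exact hpτ _ _
end
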